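/- arXiv:math/0606092 — 2 statements merged into one kernel-verified Lean document; each statement's English description precedes it below -/
import Mathlib

section
/- Fix an integer k ≥ 1, a real number q with 0 < q ≤ 1, and a real constant Π_k > 0. A sequence (p_n)_{n≥0} of real numbers satisfies Σ_{j=0}^{k} [k choose j]_q q^{(k−j)(k−j−1)/2} p_{n−j} = (−1)^{n−k} q^{−k(n−k)} Π_k for all n ≥ k if and only if there exist constants C_1, …, C_k such that for all n ≥ 0, p_n = (−1)^{n−k} q^{−nk} q^{k(k+1)/2} ( [n choose k]_q + Σ_{r=1}^{k} C_r q^{nr} [n choose k−r]_q ) Π_k. -/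
/-- `[n]_q = 1 + q + ⋯ + q^{n-1}`. -/
noncomputable def qnum (q : ℝ) (n : ℕ) : ℝ := ∑ i ∈ Finset.range n, q ^ i

/-- `[n]_q! = [1]_q [2]_q ⋯ [n]_q`. -/
noncomputable def qfact (q : ℝ) (n : ℕ) : ℝ := ∏ i ∈ Finset.range n, qnum q (i + 1)

/-- q-binomial coefficient `[n choose k]_q`, with the convention that it is `0` for `k > n`. -/
noncomputable def qbinom (q : ℝ) (n k : ℕ) : ℝ :=
  if k ≤ n then qfact q n / (qfact q (n - k) * qfact q k) else 0

/-!
Put `p n = (-1)^(n+k) q^(-nk) q^(k(k+1)/2) Π_k a n` and let `S` be the shift of sequences. By the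
`q`-binomial theorem the recurrence for `p` becomes `(S - q)(S - q²)⋯(S - q^k) a = 1`. The Pascal
rule says that `S - q^(d+m+1)` maps `n ↦ q^(nd) [n choose m+1]_q` to a multiple of
`n ↦ q^(nd) [n choose m]_q`; hence the operator maps `n ↦ [n choose k]_q` to `1` and annihilates
`n ↦ q^(nr) [n choose k-r]_q` for `1 ≤ r ≤ k`. A sequence is determined by its image under a monic
polynomial of degree `k` in `S` and its first `k` terms, and since `[n choose m]_q` vanishes for
`n < m`, the first `k` terms can be matched by solving a triangular system for the `C_r`.
-/

open Finset Polynomial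

theorem sum_range_sub_eq_sum_Icc {M : Type*} [AddCommMonoid M] (f : ℕ → M) (k : ℕ) :
    ∑ m ∈ range k, f (k - m) = ∑ r ∈ Icc 1 k, f r := by
  rw [range_eq_Ico, sum_Ico_reflect f 0 k.le_succ, Nat.add_sub_cancel_left]
  rfl

theorem exists_sum_mul_eq_of_lowerTriangular {K : Type*} [Field K] {e : ℕ → ℕ → K}
    (hdiag : ∀ m, e m m ≠ 0) (hlt : ∀ n m, n < m → e n m = 0) (a : ℕ → K) (k : ℕ) :
    ∃ D : ℕ → K, ∀ n < k, ∑ m ∈ range k, D m * e n m = a n := by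
  induction k with
  | zero => exact ⟨0, by simp⟩
  | succ k ih =>
    obtain ⟨D, hD⟩ := ih
    set x := (a k - ∑ m ∈ range k, D m * e k m) / e k k with hx
    refine ⟨Function.update D k x, fun n hn => ?_⟩
    have hsum : ∑ m ∈ range k, Function.update D k x m * e n m = ∑ m ∈ range k, D m * e n m :=
      sum_congr rfl fun m hm => by rw [Function.update_of_ne (mem_range.mp hm).ne]
    rw [sum_range_succ, hsum, Function.update_self]
    rcases Nat.lt_succ_iff_lt_or_eq.mp hn with h | rfl
    · rw [hD n h, hlt n k h, mul_zero, add_zero]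
    · rw [hx, div_mul_cancel₀ _ (hdiag n), add_sub_cancel]

theorem choose_succ_two (n : ℕ) : (n + 1).choose 2 = n + n.choose 2 := by
  rw [Nat.choose_succ_succ', Nat.choose_one_right]

theorem choose_two_add_choose_two (i j : ℕ) :
    i.choose 2 + (i + j + 1).choose 2 = i * (i + j) + (j + 1).choose 2 := by
  induction i with
  | zero => simp
  | succ i ih =>
    rw [add_right_comm i, choose_succ_two i, choose_succ_two (i + j + 1)]
    linarith

section qbinom

variable {q : ℝ}

theorem qnum_add (q : ℝ) (m n : ℕ) : qnum q (m + n) = qnum q m + q ^ m * qnum q n := by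
  simp only [qnum, sum_range_add, mul_sum, pow_add]

theorem qfact_zero (q : ℝ) : qfact q 0 = 1 := prod_range_zero _

theorem qfact_succ (q : ℝ) (n : ℕ) : qfact q (n + 1) = qfact q n * qnum q (n + 1) :=
  prod_range_succ _ n

theorem qbinom_add_left (q : ℝ) (m n : ℕ) :
    qbinom q (m + n) m = qfact q (m + n) / (qfact q n * qfact q m) := by
  simp [qbinom]

theorem qbinom_eq_zero_of_lt (q : ℝ) {n k : ℕ} (h : n < k) : qbinom q n k = 0 :=
  if_neg h.not_ge

theorem qbinom_symm_add (q : ℝ) (m n : ℕ) : qbinom q (m + n) m = qbinom q (m + n) n := by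
  rw [qbinom_add_left, add_comm m n, qbinom_add_left, mul_comm]

theorem qnum_ne_zero (hq : q ≠ -1) {n : ℕ} (hn : n ≠ 0) : qnum q n ≠ 0 :=
  geom_sum_ne_zero hq hn

theorem qfact_ne_zero (hq : q ≠ -1) (n : ℕ) : qfact q n ≠ 0 :=
  prod_ne_zero_iff.mpr fun i _ => qnum_ne_zero hq i.succ_ne_zero

theorem qbinom_self (hq : q ≠ -1) (n : ℕ) : qbinom q n n = 1 := by
  simp [qbinom, qfact_zero, qfact_ne_zero hq]

theorem qbinom_zero_right (hq : q ≠ -1) (n : ℕ) : qbinom q n 0 = 1 := by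
  simp [qbinom, qfact_zero, qfact_ne_zero hq]

theorem qbinom_succ_succ (hq : q ≠ -1) (n k : ℕ) :
    qbinom q (n + 1) (k + 1) = qbinom q n k + q ^ (k + 1) * qbinom q n (k + 1) := by
  rcases lt_trichotomy n k with h | rfl | h
  · simp [qbinom_eq_zero_of_lt, h, Nat.lt_succ_of_lt h]
  · simp [qbinom_self hq, qbinom_eq_zero_of_lt]
  · obtain ⟨d, rfl⟩ : ∃ d, n = k + 1 + d := Nat.exists_eq_add_of_le h
    have h₁ : qbinom q (k + 1 + d + 1) (k + 1) =
        qfact q (k + 1 + d + 1) / (qfact q (d + 1) * qfact q (k + 1)) :=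
      qbinom_add_left q (k + 1) (d + 1)
    have h₂ : qbinom q (k + 1 + d) k = qfact q (k + 1 + d) / (qfact q (d + 1) * qfact q k) := by
      rw [add_right_comm]
      exact qbinom_add_left q k (d + 1)
    have h₃ := qbinom_add_left q (k + 1) d
    have hsplit : qnum q (k + 1 + d + 1) = qnum q (k + 1) + q ^ (k + 1) * qnum q (d + 1) :=
      qnum_add q (k + 1) (d + 1)
    have hk := qnum_ne_zero hq k.succ_ne_zero
    have hd := qnum_ne_zero hq d.succ_ne_zero
    have hkf := qfact_ne_zero hq k
    have hdf := qfact_ne_zero hq d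
    rw [h₁, h₂, h₃, qfact_succ q (k + 1 + d), qfact_succ q k, qfact_succ q d, hsplit]
    field_simp

end qbinom

section Shift

variable {R : Type*} [CommRing R]

/-- The forward shift `(S a) n = a (n + 1)` on sequences, as a linear operator, so that linear
recurrences with constant coefficients are polynomials in it. -/
def shift (R : Type*) [CommRing R] : Module.End R (ℕ → R) :=
  LinearMap.funLeft R R Nat.succ

theorem shift_pow_apply (i : ℕ) (a : ℕ → R) (n : ℕ) : (shift R ^ i) a n = a (n + i) := by
  induction i generalizing a with
  | zero => rfl
  | succ i ih =>
    rw [pow_succ, Module.End.mul_apply, ih]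
    rfl

theorem aeval_shift_apply (P : R[X]) (a : ℕ → R) (n : ℕ) :
    aeval (shift R) P a n = ∑ i ∈ range (P.natDegree + 1), P.coeff i * a (n + i) := by
  simp [aeval_eq_sum_range, shift_pow_apply]

theorem eq_zero_of_aeval_shift_eq_zero {P : R[X]} (hP : P.Monic) {a : ℕ → R}
    (h : aeval (shift R) P a = 0) (h₀ : ∀ n < P.natDegree, a n = 0) : a = 0 := by
  funext n
  induction n using Nat.strong_induction_on with
  | _ n ih =>
    rcases lt_or_ge n P.natDegree with hn | hn
    · exact h₀ n hn
    · obtain ⟨m, rfl⟩ := Nat.exists_eq_add_of_le' hn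
      have hm := congrFun h m
      rw [aeval_shift_apply, sum_range_succ, hP.coeff_natDegree, one_mul,
        sum_eq_zero fun i hi => ?_, zero_add] at hm
      · exact hm
      · rw [ih _ (Nat.add_lt_add_left (mem_range.mp hi) m), Pi.zero_apply, mul_zero]

theorem eq_of_aeval_shift_eq {P : R[X]} (hP : P.Monic) {a b : ℕ → R}
    (h : aeval (shift R) P a = aeval (shift R) P b) (h₀ : ∀ n < P.natDegree, a n = b n) :
    a = b := by
  refine sub_eq_zero.mp (eq_zero_of_aeval_shift_eq_zero hP ?_ fun n hn => ?_)
  · rw [map_sub, h, sub_self]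
  · rw [Pi.sub_apply, h₀ n hn, sub_self]

end Shift

section qDiff

variable {R : Type*} [CommRing R]

/-- The polynomial `(X - q)(X - q²)⋯(X - q^k)`, the characteristic polynomial of the recurrence
after the normalization by `qWeight`. -/
noncomputable def qDiffPoly (q : R) (k : ℕ) : R[X] :=
  ∏ i ∈ range k, (X - C (q ^ (i + 1)))

/-- The `q`-difference operator `(S - q)(S - q²)⋯(S - q^k)` on sequences, where `S` is the
shift. -/
noncomputable def qDiff (q : R) (k : ℕ) : Module.End R (ℕ → R) :=
  aeval (shift R) (qDiffPoly q k)

theorem qDiffPoly_succ (q : R) (k : ℕ) :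
    qDiffPoly q (k + 1) = qDiffPoly q k * (X - C (q ^ (k + 1))) :=
  prod_range_succ _ k

theorem monic_qDiffPoly (q : R) (k : ℕ) : (qDiffPoly q k).Monic :=
  monic_prod_X_sub_C _ _

theorem natDegree_qDiffPoly [Nontrivial R] (q : R) (k : ℕ) : (qDiffPoly q k).natDegree = k :=
  (natDegree_finsetProd_X_sub_C_eq_card (range k) fun i => q ^ (i + 1)).trans (card_range k)

theorem qDiff_zero (q : R) : qDiff q 0 = 1 := by
  simp [qDiff, qDiffPoly]

theorem qDiff_succ_apply (q : R) (k : ℕ) (a : ℕ → R) :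
    qDiff q (k + 1) a = qDiff q k fun n => a (n + 1) - q ^ (k + 1) * a n := by
  rw [qDiff, qDiffPoly_succ, map_mul, map_sub, aeval_X, aeval_C, Module.End.mul_apply]
  rfl

theorem qDiff_succ_pow (q : R) (d : ℕ) : qDiff q (d + 1) (fun n => q ^ (n * (d + 1))) = 0 := by
  have hstep : (fun n => q ^ ((n + 1) * (d + 1)) - q ^ (d + 1) * q ^ (n * (d + 1))) = 0 := by
    funext n
    simp only [Pi.zero_apply]
    ring
  rw [qDiff_succ_apply, hstep, map_zero]

end qDiff

section Solutions

variable {q : ℝ}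

theorem coeff_qDiffPoly (hq : q ≠ -1) (k i : ℕ) :
    (qDiffPoly q k).coeff i = (-1) ^ (k - i) * q ^ (k - i + 1).choose 2 * qbinom q k i := by
  induction k generalizing i with
  | zero => cases i <;> simp [qDiffPoly, coeff_one, qbinom_self hq, qbinom_eq_zero_of_lt]
  | succ k ih =>
    rw [qDiffPoly_succ]
    rcases i with _ | i
    · rw [mul_coeff_zero, ih]
      simp only [choose_succ_two (k + 1), qbinom_zero_right hq, coeff_sub, coeff_X_zero,
        coeff_C_zero, Nat.sub_zero]
      ring
    · rw [coeff_mul_X_sub_C, ih, ih, qbinom_succ_succ hq, Nat.add_sub_add_right]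
      rcases le_or_gt k i with hi | hi
      · rw [qbinom_eq_zero_of_lt q (Nat.lt_succ_of_le hi)]
        ring
      · obtain ⟨d, rfl⟩ : ∃ d, k = i + 1 + d := Nat.exists_eq_add_of_le hi
        have hd : i + 1 + d - i = d + 1 := by omega
        rw [Nat.add_sub_cancel_left, hd, choose_succ_two (d + 1)]
        ring

theorem qDiff_apply (hq : q ≠ -1) (k : ℕ) (a : ℕ → ℝ) (n : ℕ) :
    qDiff q k a n = ∑ i ∈ range (k + 1),
      (-1) ^ (k - i) * q ^ (k - i + 1).choose 2 * qbinom q k i * a (n + i) := by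
  simp only [qDiff, aeval_shift_apply, natDegree_qDiffPoly, coeff_qDiffPoly hq]

theorem qDiff_pow_mul_qbinom (hq : q ≠ -1) (d m : ℕ) :
    qDiff q (d + m) (fun n => q ^ (n * d) * qbinom q n m) =
      q ^ (d * m) • qDiff q d fun n => q ^ (n * d) := by
  induction m with
  | zero => simp [qbinom_zero_right hq]
  | succ m ih =>
    have hstep : (fun n => q ^ ((n + 1) * d) * qbinom q (n + 1) (m + 1) -
        q ^ (d + m + 1) * (q ^ (n * d) * qbinom q n (m + 1))) =
        q ^ d • fun n => q ^ (n * d) * qbinom q n m := by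
      funext n
      rw [qbinom_succ_succ hq, Pi.smul_apply, smul_eq_mul]
      ring
    rw [← add_assoc, qDiff_succ_apply, hstep, map_smul, ih, smul_smul, ← pow_add, mul_add_one,
      add_comm]

theorem qDiff_qbinom (hq : q ≠ -1) (k : ℕ) : qDiff q k (fun n => qbinom q n k) = 1 := by
  have h := qDiff_pow_mul_qbinom hq 0 k
  simp only [zero_add, mul_zero, zero_mul, pow_zero, one_mul, one_smul, qDiff_zero] at h
  exact h

theorem qDiff_pow_mul_qbinom_sub (hq : q ≠ -1) {r k : ℕ} (hr : 1 ≤ r) (hrk : r ≤ k) :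
    qDiff q k (fun n => q ^ (n * r) * qbinom q n (k - r)) = 0 := by
  obtain ⟨m, rfl⟩ := Nat.exists_eq_add_of_le hrk
  obtain ⟨d, rfl⟩ := Nat.exists_eq_add_of_le' hr
  rw [Nat.add_sub_cancel_left, qDiff_pow_mul_qbinom hq, qDiff_succ_pow, smul_zero]

/-- The general solution of `qDiff q k a = 1`, with free constants `C 1, …, C k`. -/
noncomputable def qSolution (q : ℝ) (k : ℕ) (C : ℕ → ℝ) (n : ℕ) : ℝ :=
  qbinom q n k + ∑ r ∈ Icc 1 k, C r * q ^ (n * r) * qbinom q n (k - r)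

theorem qDiff_qSolution (hq : q ≠ -1) (k : ℕ) (C : ℕ → ℝ) : qDiff q k (qSolution q k C) = 1 := by
  have hsol : qSolution q k C = (fun n => qbinom q n k) +
      ∑ r ∈ Icc 1 k, C r • fun n => q ^ (n * r) * qbinom q n (k - r) := by
    funext n
    simp [qSolution, mul_assoc]
  rw [hsol, map_add, qDiff_qbinom hq, map_sum, sum_eq_zero fun r hr => ?_, add_zero]
  obtain ⟨hr, hrk⟩ := mem_Icc.mp hr
  rw [map_smul, qDiff_pow_mul_qbinom_sub hq hr hrk, smul_zero]

theorem exists_qSolution_eq_of_lt (hq₀ : q ≠ 0) (hq : q ≠ -1) (k : ℕ) (a : ℕ → ℝ) :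
    ∃ C : ℕ → ℝ, ∀ n < k, a n = qSolution q k C n := by
  obtain ⟨D, hD⟩ := exists_sum_mul_eq_of_lowerTriangular
    (e := fun n m => q ^ (n * (k - m)) * qbinom q n m)
    (fun m => by simp [qbinom_self hq, hq₀])
    (fun n m h => by simp [qbinom_eq_zero_of_lt q h]) a k
  refine ⟨fun r => D (k - r), fun n hn => ?_⟩
  rw [qSolution, qbinom_eq_zero_of_lt q hn, zero_add, ← hD n hn, ← sum_range_sub_eq_sum_Icc]
  refine sum_congr rfl fun m hm => ?_
  rw [Nat.sub_sub_self (mem_range.mp hm).le, mul_assoc]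

theorem qDiff_eq_one_iff (hq₀ : q ≠ 0) (hq : q ≠ -1) (k : ℕ) (a : ℕ → ℝ) :
    qDiff q k a = 1 ↔ ∃ C : ℕ → ℝ, ∀ n, a n = qSolution q k C n := by
  constructor
  · intro ha
    obtain ⟨C, hC⟩ := exists_qSolution_eq_of_lt hq₀ hq k a
    refine ⟨C, congrFun (eq_of_aeval_shift_eq (monic_qDiffPoly q k) ?_ ?_)⟩
    · exact ha.trans (qDiff_qSolution hq k C).symm
    · rwa [natDegree_qDiffPoly]
  · rintro ⟨C, hC⟩
    rw [funext hC, qDiff_qSolution hq]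

end Solutions

section Normalization

variable {q : ℝ}

/-- The factor `(-1)^(n-k) q^(-nk) q^(k(k+1)/2)` relating `p n` to a solution `a n` of
`qDiff q k a = 1`; the sign is written `(-1)^(n+k)` because `n - k` is truncated. -/
noncomputable def qWeight (q : ℝ) (k n : ℕ) : ℝ :=
  (-1) ^ (n + k) * (q ^ (n * k))⁻¹ * q ^ (k * (k + 1) / 2)

theorem qWeight_ne_zero (hq₀ : q ≠ 0) (k n : ℕ) : qWeight q k n ≠ 0 := by
  simp [qWeight, hq₀]

theorem pow_mul_qWeight (hq₀ : q ≠ 0) (i j m : ℕ) :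
    q ^ (i * (i - 1) / 2) * qWeight q (i + j) (m + i) =
      (-1) ^ m * (q ^ ((i + j) * m))⁻¹ * ((-1) ^ j * q ^ (j + 1).choose 2) := by
  have hsign : (-1 : ℝ) ^ (m + i + (i + j)) = (-1) ^ m * (-1) ^ j := by
    rw [show m + i + (i + j) = m + j + 2 * i by ring, pow_add, pow_mul, neg_one_sq, one_pow,
      mul_one, pow_add]
  have hexp : q ^ i.choose 2 * q ^ (i + j + 1).choose 2 =
      q ^ (i * (i + j)) * q ^ (j + 1).choose 2 := by
    rw [← pow_add, ← pow_add, choose_two_add_choose_two]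
  have htriangle : (i + j) * (i + j + 1) / 2 = (i + j + 1).choose 2 := by
    rw [Nat.choose_two_right, Nat.add_sub_cancel, mul_comm]
  have hsplit : q ^ ((m + i) * (i + j)) = q ^ ((i + j) * m) * q ^ (i * (i + j)) := by
    rw [← pow_add]
    ring
  rw [qWeight, hsign, htriangle, hsplit, ← Nat.choose_two_right]
  field_simp
  linear_combination hexp

theorem sum_qbinom_mul_qWeight (hq₀ : q ≠ 0) (hq : q ≠ -1) (k : ℕ) (c : ℝ) (a : ℕ → ℝ) (m : ℕ) :
    ∑ j ∈ range (k + 1), qbinom q k j * q ^ ((k - j) * (k - j - 1) / 2) *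
        (qWeight q k (m + k - j) * a (m + k - j) * c) =
      (-1) ^ m * (q ^ (k * m))⁻¹ * c * qDiff q k a m := by
  rw [qDiff_apply hq, ← sum_flip, mul_sum]
  refine sum_congr rfl fun i hi => ?_
  obtain ⟨j, rfl⟩ := Nat.exists_eq_add_of_le (mem_range_succ_iff.mp hi)
  have hindex : m + (i + j) - j = m + i := by omega
  rw [Nat.add_sub_cancel_left, Nat.add_sub_cancel, hindex, ← qbinom_symm_add]
  linear_combination qbinom q (i + j) i * a (m + i) * c * pow_mul_qWeight hq₀ i j m

theorem recurrence_qWeight_iff (hq₀ : q ≠ 0) (hq : q ≠ -1) (k : ℕ) {c : ℝ} (hc : c ≠ 0)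
    (a : ℕ → ℝ) :
    (∀ n, k ≤ n →
        ∑ j ∈ range (k + 1), qbinom q k j * q ^ ((k - j) * (k - j - 1) / 2) *
            (qWeight q k (n - j) * a (n - j) * c) =
          (-1) ^ (n - k) * (q ^ (k * (n - k)))⁻¹ * c) ↔
      qDiff q k a = 1 := by
  have hfactor (m : ℕ) : (-1 : ℝ) ^ m * (q ^ (k * m))⁻¹ * c ≠ 0 := by simp [hq₀, hc]
  constructor
  · intro h
    funext m
    have hm := h (m + k) (Nat.le_add_left k m)
    rw [sum_qbinom_mul_qWeight hq₀ hq, Nat.add_sub_cancel] at hm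
    exact (mul_eq_left₀ (hfactor m)).mp hm
  · intro h n hn
    obtain ⟨m, rfl⟩ := Nat.exists_eq_add_of_le' hn
    rw [sum_qbinom_mul_qWeight hq₀ hq, Nat.add_sub_cancel, h, Pi.one_apply, mul_one]

end Normalization

theorem stmt5_general (q : ℝ) (hq₀ : q ≠ 0) (hq : q ≠ -1) (k : ℕ) (Pik : ℝ) (hPik : Pik ≠ 0)
    (p : ℕ → ℝ) :
    (∀ n : ℕ, k ≤ n →
        ∑ j ∈ Finset.range (k + 1),
            qbinom q k j * q ^ ((k - j) * (k - j - 1) / 2) * p (n - j)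
          = (-1 : ℝ) ^ (n - k) * (q ^ (k * (n - k)))⁻¹ * Pik)
      ↔ ∃ C : ℕ → ℝ, ∀ n : ℕ,
          p n = (-1 : ℝ) ^ (n + k) * (q ^ (n * k))⁻¹ * q ^ (k * (k + 1) / 2) *
            (qbinom q n k +
              ∑ r ∈ Finset.Icc 1 k, C r * q ^ (n * r) * qbinom q n (k - r)) * Pik := by
  obtain ⟨a, rfl⟩ : ∃ a : ℕ → ℝ, p = fun n => qWeight q k n * a n * Pik :=
    ⟨fun n => p n / (qWeight q k n * Pik), funext fun n => by
      field_simp [qWeight_ne_zero hq₀ k n]⟩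
  rw [recurrence_qWeight_iff hq₀ hq k hPik a, qDiff_eq_one_iff hq₀ hq]
  refine exists_congr fun C => forall_congr' fun n => ?_
  change _ ↔ qWeight q k n * a n * Pik = qWeight q k n * qSolution q k C n * Pik
  rw [mul_left_inj' hPik, mul_right_inj' (qWeight_ne_zero hq₀ k n)]

/-- for `k ≥ 1`, `0 < q ≤ 1`, `Π_k > 0`, a sequence `(p_n)` satisfies
`∑_{j=0}^k [k choose j]_q q^{(k-j)(k-j-1)/2} p_{n-j} = (-1)^{n-k} q^{-k(n-k)} Π_k` for all
`n ≥ k` iff there exist constants `C_1, …, C_k` with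
`p_n = (-1)^{n-k} q^{-nk} q^{k(k+1)/2} ([n choose k]_q + ∑_{r=1}^k C_r q^{nr} [n choose k-r]_q) Π_k`
for all `n ≥ 0`.  (Since `n - k` may be negative, the sign `(-1)^{n-k}` is written as
`(-1)^{n+k}`, which agrees with it whenever both make sense.) -/
theorem stmt5 (q : ℝ) (hq0 : 0 < q) (hq1 : q ≤ 1) (k : ℕ) (hk : 1 ≤ k)
    (Pik : ℝ) (hPik : 0 < Pik) (p : ℕ → ℝ) :
    (∀ n : ℕ, k ≤ n →
        ∑ j ∈ Finset.range (k + 1),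
            qbinom q k j * q ^ ((k - j) * (k - j - 1) / 2) * p (n - j)
          = (-1 : ℝ) ^ (n - k) * (q ^ (k * (n - k)))⁻¹ * Pik)
      ↔ ∃ C : ℕ → ℝ, ∀ n : ℕ,
          p n = (-1 : ℝ) ^ (n + k) * (q ^ (n * k))⁻¹ * q ^ (k * (k + 1) / 2) *
            (qbinom q n k +
              ∑ r ∈ Finset.Icc 1 k, C r * q ^ (n * r) * qbinom q n (k - r)) * Pik :=
  stmt5_general q hq0.ne' (by linarith) k Pik hPik.ne' p
end

section
/- Let 0 ≤ q ≤ 1, η > 0, θ ≥ 0, τ ≥ 0 and fix t > 0. If μ₁ and μ₂ are two probability measures on ℝ, each with finite moments of all orders, such that for each i ∈ {1,2} one has ∫ p_m(y;t) p_n(y;t) μ_i(dy) = 0 whenever m ≠ n, then μ₁ = μ₂. In other words, the orthogonality measure of the polynomials {p_n(·;t)} is determined uniquely by its moments. -/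
/-- `a_n = η⁻¹ + θ[n]_q + [n]_q² ητ`. -/
noncomputable def aCoef (η θ τ q : ℝ) (n : ℕ) : ℝ :=
  η⁻¹ + θ * qnum q n + (qnum q n) ^ 2 * η * τ

/-- `b_n(t) = (tη + θ + ([n]_q + [n-1]_q)ητ)[n]_q`. -/
noncomputable def bCoef (η θ τ q t : ℝ) (n : ℕ) : ℝ :=
  (t * η + θ + (qnum q n + qnum q (n - 1)) * η * τ) * qnum q n

/-- `c_n(t) = η(t + τ[n-1]_q)[n]_q`. -/
noncomputable def cCoef (η τ q t : ℝ) (n : ℕ) : ℝ :=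
  η * (t + τ * qnum q (n - 1)) * qnum q n

/-- `A_n(x,s) = a_n + q^n x - sη q^n [n]_q`. -/
noncomputable def ACoef (η θ τ q x s : ℝ) (n : ℕ) : ℝ :=
  aCoef η θ τ q n + q ^ n * x - s * η * q ^ n * qnum q n

/-- `x_k(s) = ((sη q^k - θ)[k]_q - η⁻¹ - ητ[k]_q²)/q^k`, the zero of `x ↦ A_k(x,s)`. -/
noncomputable def xPt (η θ τ q s : ℝ) (k : ℕ) : ℝ :=
  ((s * η * q ^ k - θ) * qnum q k - η⁻¹ - η * τ * (qnum q k) ^ 2) / q ^ k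

open MeasureTheory

/-!
For nonreal `z`, the functions of the second kind `Q n = ∫ p n y / (y - z) dμ(y)` of an
orthogonality measure `μ` solve the three-term recurrence at `z` from index `1` on, and by Bessel's
inequality they are square summable against the weights `1 / h n`, where `h n = ∫ (p n) ^ 2 dμ`
depends on the recurrence only. If two measures had Stieltjes transforms differing at `z`, their
functions of the second kind would be two independent square-summable solutions. By variation of
constants every solution at every spectral parameter would then be square summable (Weyl's limit
circle case).

At the spectral parameter `-1 / η` this fails. Since `a n - b n + c n = 1 / η`, the sequences
`(-1) ^ n` and `(-1) ^ n * s n`, where `s` is the scale function of the birth-death chain with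
rates `a` and `c`, are solutions there. From `c (n + 1) ≤ a n + O(n)` one gets `h n ≤ O(n) s n`, so
`∑ (1 + s n ^ 2) / h n` dominates the harmonic series. Hence the Stieltjes transforms agree, and
they determine the measure.
-/

section StieltjesTransform

open ProbabilityTheory Filter
open scoped NNReal ENNReal Real Topology

lemma resolvent_ofReal_eq_inv (z : ℂ) (x : ℝ) : resolvent z x = ((x : ℂ) - z)⁻¹ := by
  rw [resolvent, Ring.inverse_eq_inv', Complex.coe_algebraMap]

lemma norm_resolvent_ofReal_le {z : ℂ} (hz : z.im ≠ 0) (x : ℝ) :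
    ‖resolvent z x‖ ≤ |z.im|⁻¹ := by
  have him : |z.im| ≤ ‖(x : ℂ) - z‖ := by simpa using Complex.abs_im_le_norm ((x : ℂ) - z)
  rw [resolvent_ofReal_eq_inv, norm_inv]
  gcongr

lemma memLp_resolvent_ofReal (μ : Measure ℝ) [IsFiniteMeasure μ] {z : ℂ} (hz : z.im ≠ 0)
    (r : ℝ≥0∞) : MemLp (fun x : ℝ => resolvent z x) r μ :=
  MemLp.of_bound (by fun_prop) _ (.of_forall (norm_resolvent_ofReal_le hz))

lemma im_resolvent_eq_pi_mul_cauchyPDFReal (x y : ℝ) (γ : ℝ≥0) :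
    (resolvent (⟨x, γ⟩ : ℂ) y).im = π * cauchyPDFReal y γ x := by
  have hnormSq : Complex.normSq ((y : ℂ) - ⟨x, γ⟩) = (x - y) ^ 2 + γ ^ 2 := by
    simp only [Complex.normSq_apply, Complex.sub_re, Complex.sub_im, Complex.ofReal_re,
      Complex.ofReal_im]
    ring
  rw [resolvent_ofReal_eq_inv, Complex.inv_im, hnormSq, cauchyPDFReal_def, Complex.sub_im,
    Complex.ofReal_im]
  field_simp
  ring

lemma lintegral_cauchyPDF_location (μ : Measure ℝ) [IsFiniteMeasure μ] {γ : ℝ≥0} (hγ : γ ≠ 0)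
    (x : ℝ) :
    ∫⁻ y, cauchyPDF y γ x ∂μ
      = ENNReal.ofReal (π⁻¹ * (resolventTransform μ (⟨x, γ⟩ : ℂ)).im) := by
  have hint : Integrable (fun y : ℝ => resolvent (⟨x, γ⟩ : ℂ) y) μ :=
    memLp_one_iff_integrable.1 (memLp_resolvent_ofReal μ (by simpa using hγ) 1)
  have him (y : ℝ) :
      cauchyPDFReal y γ x = π⁻¹ * RCLike.im (resolvent (⟨x, γ⟩ : ℂ) y) := by
    rw [RCLike.im_eq_complex_im, im_resolvent_eq_pi_mul_cauchyPDFReal,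
      inv_mul_cancel_left₀ Real.pi_ne_zero]
  have hpdf : Integrable (fun y => cauchyPDFReal y γ x) μ := by
    simpa only [him] using hint.im.const_mul π⁻¹
  simp only [cauchyPDF_def]
  rw [← ofReal_integral_eq_lintegral_ofReal hpdf
    (.of_forall fun y => (cauchyPDF_pos y hγ x).le)]
  simp only [him]
  rw [integral_const_mul, integral_im hint, resolventTransform_apply, RCLike.im_eq_complex_im]

lemma conv_cauchyMeasure (μ : Measure ℝ) [SFinite μ] {γ : ℝ≥0} (hγ : γ ≠ 0) :
    μ ∗ cauchyMeasure 0 γ = volume.withDensity fun x => ∫⁻ y, cauchyPDF y γ x ∂μ := by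
  have hmeas : Measurable fun r : ℝ × ℝ => cauchyPDF r.1 γ r.2 := by
    unfold cauchyPDF cauchyPDFReal
    fun_prop
  refine Measure.ext_of_lintegral _ fun g hg => ?_
  have hshift (y : ℝ) :
      ∫⁻ x, g (y + x) ∂cauchyMeasure 0 γ = ∫⁻ x, cauchyPDF y γ x * g x := by
    rw [cauchyMeasure_of_scale_ne_zero 0 hγ,
      lintegral_withDensity_eq_lintegral_mul _ (by fun_prop) (by fun_prop),
      ← lintegral_add_left_eq_self (fun x => cauchyPDF y γ x * g x) y]
    simp [cauchyPDF_def, cauchyPDFReal_def]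
  have hprod : Measurable fun r : ℝ × ℝ => cauchyPDF r.1 γ r.2 * g r.2 :=
    hmeas.mul (hg.comp measurable_snd)
  have hdens : Measurable fun x => ∫⁻ y, cauchyPDF y γ x ∂μ := hmeas.lintegral_prod_left'
  calc ∫⁻ x, g x ∂(μ ∗ cauchyMeasure 0 γ)
      = ∫⁻ y, (∫⁻ x, cauchyPDF y γ x * g x) ∂μ := by
        simp only [Measure.lintegral_conv hg, hshift]
    _ = ∫⁻ x, (∫⁻ y, cauchyPDF y γ x * g x ∂μ) :=
        lintegral_lintegral_swap hprod.aemeasurable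
    _ = ∫⁻ x, (∫⁻ y, cauchyPDF y γ x ∂μ) * g x := by
        congr with x
        exact lintegral_mul_const _ (hmeas.comp measurable_prodMk_right :)
    _ = ∫⁻ x, g x ∂volume.withDensity fun x => ∫⁻ y, cauchyPDF y γ x ∂μ :=
        (lintegral_withDensity_eq_lintegral_mul _ hdens hg).symm

lemma charFun_cauchyMeasure_scale {γ : ℝ≥0} (hγ : γ ≠ 0) (t : ℝ) :
    charFun (cauchyMeasure 0 γ) t = charFun (cauchyMeasure 0 1) (γ * t) := by
  have hγ' : (γ : ℝ) ≠ 0 := by exact_mod_cast hγ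
  have hcharFun {δ : ℝ≥0} (hδ : δ ≠ 0) (s : ℝ) : charFun (cauchyMeasure 0 δ) s
      = ∫ x : ℝ, cauchyPDFReal 0 δ x • Complex.exp (s * x * Complex.I) := by
    rw [charFun_apply_real, cauchyMeasure_of_scale_ne_zero 0 hδ,
      integral_withDensity_eq_integral_toReal_smul (measurable_cauchyPDF 0 δ)
        (.of_forall fun x => ENNReal.ofReal_lt_top)]
    simp only [cauchyPDF_def, ENNReal.toReal_ofReal (cauchyPDF_pos 0 hδ _).le]
  have hscale (x : ℝ) : cauchyPDFReal 0 1 x = |(γ : ℝ)| * cauchyPDFReal 0 γ (γ * x) := by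
    rw [cauchyPDFReal_def', cauchyPDFReal_def', abs_of_nonneg γ.coe_nonneg]
    simp only [sub_zero, NNReal.coe_one, div_one, mul_div_cancel_left₀ x hγ',
      NNReal.coe_inv, inv_one]
    field_simp
  rw [hcharFun hγ, hcharFun one_ne_zero]
  calc ∫ x : ℝ, cauchyPDFReal 0 γ x • Complex.exp (t * x * Complex.I)
      = |(γ : ℝ)| • ∫ x : ℝ, cauchyPDFReal 0 γ (γ * x)
          • Complex.exp (t * (γ * x : ℝ) * Complex.I) := by
        rw [Measure.integral_comp_mul_left
          (fun x : ℝ => cauchyPDFReal 0 γ x • Complex.exp (t * x * Complex.I)), smul_smul,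
          abs_inv, mul_inv_cancel₀ (abs_ne_zero.2 hγ'), one_smul]
    _ = ∫ x : ℝ, cauchyPDFReal 0 1 x • Complex.exp ((γ * t : ℝ) * x * Complex.I) := by
        rw [← integral_smul]
        congr with x
        rw [hscale, smul_smul]
        push_cast
        ring_nf

lemma exists_charFun_cauchyMeasure_ne_zero (t : ℝ) :
    ∃ γ : ℝ≥0, γ ≠ 0 ∧ charFun (cauchyMeasure 0 γ) t ≠ 0 := by
  have hlim : Tendsto (fun γ : ℝ≥0 => charFun (cauchyMeasure 0 1) (γ * t)) (𝓝[>] (0 : ℝ≥0))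
      (𝓝 1) := by
    have hcont : Continuous fun γ : ℝ≥0 => charFun (cauchyMeasure 0 1) (γ * t) :=
      continuous_charFun.comp (by fun_prop)
    simpa using (hcont.tendsto 0).mono_left nhdsWithin_le_nhds
  obtain ⟨γ, hne, hγ⟩ :=
    ((hlim.eventually_ne one_ne_zero).and self_mem_nhdsWithin).exists
  have hγ0 : γ ≠ 0 := (show 0 < γ from hγ).ne'
  exact ⟨γ, hγ0, charFun_cauchyMeasure_scale hγ0 t ▸ hne⟩

-- Up to a factor `π`, the imaginary part of the Stieltjes transform on the line `Im z = γ` is the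
-- density of the convolution with a Cauchy law, and that convolution can be undone on
-- characteristic functions.
theorem eq_of_resolventTransform_eq {μ ν : Measure ℝ} [IsFiniteMeasure μ] [IsFiniteMeasure ν]
    (h : ∀ z : ℂ, 0 < z.im → resolventTransform μ z = resolventTransform ν z) : μ = ν := by
  refine Measure.ext_of_charFun (funext fun t => ?_)
  obtain ⟨γ, hγ, hne⟩ := exists_charFun_cauchyMeasure_ne_zero t
  have hconv : μ ∗ cauchyMeasure 0 γ = ν ∗ cauchyMeasure 0 γ := by
    simp only [conv_cauchyMeasure _ hγ, lintegral_cauchyPDF_location _ hγ,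
      h _ (show 0 < (⟨_, γ⟩ : ℂ).im from NNReal.coe_pos.2 (pos_iff_ne_zero.2 hγ))]
  refine mul_right_cancel₀ hne ?_
  rw [← charFun_conv, ← charFun_conv, hconv]

end StieltjesTransform

section Recurrence

/-- Solutions of the three-term recurrence with coefficients `a`, `b`, `c` at the spectral
parameter `z`. The equation with index `0`, which fixes the ratio `u 1 / u 0`, is left out: it
holds for the orthogonal polynomials but not for the functions of the second kind. -/
def IsRecurrenceSolution (a b c : ℕ → ℝ) (z : ℂ) (u : ℕ → ℂ) : Prop :=
  ∀ n, z * u (n + 1) = a (n + 1) * u (n + 2) + b (n + 1) * u (n + 1) + c (n + 1) * u n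

/-- The weights `h n = c 1 ⋯ c n / (a 0 ⋯ a (n - 1))` that symmetrize a three-term recurrence. They
are the squared norms of its orthogonal polynomials. -/
noncomputable def jacobiWeight (a c : ℕ → ℝ) (n : ℕ) : ℝ :=
  ∏ k ∈ Finset.range n, c (k + 1) / a k

/-- The discrete Wronskian of two sequences, normalized so as to be constant when both solve the
recurrence at the same spectral parameter. -/
noncomputable def casoratian (a c : ℕ → ℝ) (v w : ℕ → ℂ) (n : ℕ) : ℂ :=
  (a n / jacobiWeight a c n : ℝ) * (v n * w (n + 1) - v (n + 1) * w n)

variable {a b c : ℕ → ℝ} {x z : ℂ} {f g u v w : ℕ → ℂ}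

lemma jacobiWeight_zero : jacobiWeight a c 0 = 1 :=
  Finset.prod_range_zero _

lemma jacobiWeight_pos (ha : ∀ n, 0 < a n) (hc : ∀ n, 0 < c (n + 1)) (n : ℕ) :
    0 < jacobiWeight a c n :=
  Finset.prod_pos fun k _ => div_pos (hc k) (ha k)

lemma jacobiWeight_succ_mul {n : ℕ} (hn : a n ≠ 0) :
    jacobiWeight a c (n + 1) * a n = jacobiWeight a c n * c (n + 1) := by
  rw [jacobiWeight, Finset.prod_range_succ, ← jacobiWeight, mul_assoc,
    div_mul_cancel₀ _ hn]

lemma casoratian_succ (ha : ∀ n, 0 < a n) (hc : ∀ n, 0 < c (n + 1))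
    (hv : IsRecurrenceSolution a b c x v) (hw : IsRecurrenceSolution a b c z w) (n : ℕ) :
    casoratian a c v w (n + 1) = casoratian a c v w n
      + (z - x) * (v (n + 1) * w (n + 1)) / (jacobiWeight a c (n + 1) : ℝ) := by
  have hratio : a n / jacobiWeight a c n = c (n + 1) / jacobiWeight a c (n + 1) := by
    rw [div_eq_div_iff (jacobiWeight_pos ha hc n).ne' (jacobiWeight_pos ha hc (n + 1)).ne',
      mul_comm, jacobiWeight_succ_mul (ha n).ne', mul_comm]
  have hne : (jacobiWeight a c (n + 1) : ℂ) ≠ 0 := by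
    exact_mod_cast (jacobiWeight_pos ha hc (n + 1)).ne'
  rw [casoratian, casoratian, hratio]
  push_cast
  field_simp
  linear_combination w (n + 1) * hv n - v (n + 1) * hw n

lemma casoratian_eq_casoratian_zero (ha : ∀ n, 0 < a n) (hc : ∀ n, 0 < c (n + 1))
    (hv : IsRecurrenceSolution a b c z v) (hw : IsRecurrenceSolution a b c z w) (n : ℕ) :
    casoratian a c v w n = casoratian a c v w 0 := by
  induction n with
  | zero => rfl
  | succ n ih => rw [casoratian_succ ha hc hv hw, ih, sub_self, zero_mul, zero_div, add_zero]

lemma mul_casoratian_eq_sub (n : ℕ) :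
    u (n + 1) * casoratian a c f g n
      = f (n + 1) * casoratian a c u g n - g (n + 1) * casoratian a c u f n := by
  simp only [casoratian]
  ring

lemma norm_mul_norm_casoratian_le (n : ℕ) :
    ‖u (n + 1)‖ * ‖casoratian a c f g n‖ ≤ (‖f (n + 1)‖ + ‖g (n + 1)‖)
      * (‖casoratian a c u f n‖ + ‖casoratian a c u g n‖) := by
  calc ‖u (n + 1)‖ * ‖casoratian a c f g n‖
      = ‖f (n + 1) * casoratian a c u g n - g (n + 1) * casoratian a c u f n‖ := by
        rw [← norm_mul, mul_casoratian_eq_sub]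
    _ ≤ ‖f (n + 1)‖ * ‖casoratian a c u g n‖ + ‖g (n + 1)‖ * ‖casoratian a c u f n‖ := by
        simpa only [norm_mul] using norm_sub_le (f (n + 1) * casoratian a c u g n)
          (g (n + 1) * casoratian a c u f n)
    _ ≤ (‖f (n + 1)‖ + ‖g (n + 1)‖)
          * (‖casoratian a c u f n‖ + ‖casoratian a c u g n‖) := by
        have hff : 0 ≤ ‖f (n + 1)‖ * ‖casoratian a c u f n‖ := by positivity
        have hgg : 0 ≤ ‖g (n + 1)‖ * ‖casoratian a c u g n‖ := by positivity
        linarith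

lemma norm_casoratian_succ_le (ha : ∀ n, 0 < a n) (hc : ∀ n, 0 < c (n + 1))
    (hu : IsRecurrenceSolution a b c x u) (hf : IsRecurrenceSolution a b c z f) (n : ℕ) :
    ‖casoratian a c u f (n + 1)‖ ≤ ‖casoratian a c u f n‖
      + ‖z - x‖ * (‖u (n + 1)‖ * ‖f (n + 1)‖) / jacobiWeight a c (n + 1) := by
  rw [casoratian_succ ha hc hu hf]
  refine (norm_add_le _ _).trans_eq ?_
  rw [norm_div, norm_mul, norm_mul, Complex.norm_of_nonneg (jacobiWeight_pos ha hc _).le]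

lemma summable_sq_norm_add_norm_div {h : ℕ → ℝ} (hh : ∀ n, 0 < h n)
    (hf : Summable fun n => ‖f n‖ ^ 2 / h n) (hg : Summable fun n => ‖g n‖ ^ 2 / h n) :
    Summable fun n => (‖f n‖ + ‖g n‖) ^ 2 / h n := by
  refine .of_nonneg_of_le (fun n => div_nonneg (sq_nonneg _) (hh n).le) (fun n => ?_)
    ((hf.add hg).mul_left 2)
  rw [← add_div, ← mul_div_assoc]
  exact div_le_div_of_nonneg_right add_sq_le (hh n).le

lemma norm_succ_le_of_casoratian_ne_zero (ha : ∀ n, 0 < a n) (hc : ∀ n, 0 < c (n + 1))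
    (hf : IsRecurrenceSolution a b c z f) (hg : IsRecurrenceSolution a b c z g)
    (hW : casoratian a c f g 0 ≠ 0) (n : ℕ) :
    ‖u (n + 1)‖ ≤ (‖f (n + 1)‖ + ‖g (n + 1)‖)
      * (‖casoratian a c u f n‖ + ‖casoratian a c u g n‖) / ‖casoratian a c f g 0‖ := by
  rw [le_div_iff₀ (norm_pos_iff.2 hW), ← casoratian_eq_casoratian_zero ha hc hf hg n]
  exact norm_mul_norm_casoratian_le n

-- Variation of constants: the coefficients of `u` in the basis `f`, `g` are its Casoratians with
-- `g` and `f`, so they satisfy a Grönwall inequality.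
lemma norm_casoratian_add_succ_le (ha : ∀ n, 0 < a n) (hc : ∀ n, 0 < c (n + 1))
    (hu : IsRecurrenceSolution a b c x u)
    (hf : IsRecurrenceSolution a b c z f) (hg : IsRecurrenceSolution a b c z g)
    (hW : casoratian a c f g 0 ≠ 0) (n : ℕ) :
    ‖casoratian a c u f (n + 1)‖ + ‖casoratian a c u g (n + 1)‖
      ≤ (1 + ‖z - x‖ / ‖casoratian a c f g 0‖
            * ((‖f (n + 1)‖ + ‖g (n + 1)‖) ^ 2 / jacobiWeight a c (n + 1)))
          * (‖casoratian a c u f n‖ + ‖casoratian a c u g n‖) := by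
  set T : ℕ → ℝ := fun n => ‖casoratian a c u f n‖ + ‖casoratian a c u g n‖
  set S := ‖f (n + 1)‖ + ‖g (n + 1)‖
  have hh := jacobiWeight_pos ha hc (n + 1)
  calc T (n + 1)
      ≤ T n + ‖z - x‖ * (‖u (n + 1)‖ * S) / jacobiWeight a c (n + 1) := by
        refine (add_le_add (norm_casoratian_succ_le ha hc hu hf n)
          (norm_casoratian_succ_le ha hc hu hg n)).trans_eq ?_
        simp only [T, S]
        ring
    _ ≤ T n + ‖z - x‖ * (S * T n / ‖casoratian a c f g 0‖ * S) / jacobiWeight a c (n + 1) := by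
        gcongr
        exact norm_succ_le_of_casoratian_ne_zero ha hc hf hg hW n
    _ = (1 + ‖z - x‖ / ‖casoratian a c f g 0‖ * (S ^ 2 / jacobiWeight a c (n + 1))) * T n := by
        ring

lemma exists_forall_le_of_le_one_add_mul {T κ : ℕ → ℝ} (hT : 0 ≤ T 0) (hκ : ∀ n, 0 ≤ κ n)
    (hsum : Summable κ) (h : ∀ n, T (n + 1) ≤ (1 + κ n) * T n) : ∃ M, ∀ n, T n ≤ M := by
  refine ⟨T 0 * Real.exp (∑' k, κ k), fun n => ?_⟩
  calc T n ≤ T 0 * Real.exp (∑ k ∈ Finset.range n, κ k) := by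
        simpa using discrete_gronwall (b := 0) hT (fun k _ => by simpa using h k)
          (fun k _ => hκ k) (fun _ _ => le_rfl) n.zero_le
    _ ≤ T 0 * Real.exp (∑' k, κ k) := by
        gcongr
        exact hsum.sum_le_tsum _ fun k _ => hκ k

theorem IsRecurrenceSolution.summable_norm_sq_div (ha : ∀ n, 0 < a n) (hc : ∀ n, 0 < c (n + 1))
    (hu : IsRecurrenceSolution a b c x u)
    (hf : IsRecurrenceSolution a b c z f) (hg : IsRecurrenceSolution a b c z g)
    (hfg : f 0 * g 1 - f 1 * g 0 ≠ 0)
    (hf_sum : Summable fun n => ‖f n‖ ^ 2 / jacobiWeight a c n)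
    (hg_sum : Summable fun n => ‖g n‖ ^ 2 / jacobiWeight a c n) :
    Summable fun n => ‖u n‖ ^ 2 / jacobiWeight a c n := by
  have hh := jacobiWeight_pos ha hc
  have hW : casoratian a c f g 0 ≠ 0 :=
    mul_ne_zero (Complex.ofReal_ne_zero.2 (div_pos (ha 0) (hh 0)).ne') hfg
  set ω := ‖casoratian a c f g 0‖
  set β : ℕ → ℝ := fun n => (‖f n‖ + ‖g n‖) ^ 2 / jacobiWeight a c n
  have hβ (n : ℕ) : 0 ≤ β n := div_nonneg (sq_nonneg _) (hh n).le
  have hβ_sum : Summable fun n => β (n + 1) :=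
    (summable_nat_add_iff 1).2 (summable_sq_norm_add_norm_div hh hf_sum hg_sum)
  obtain ⟨M, hM⟩ : ∃ M, ∀ n, ‖casoratian a c u f n‖ + ‖casoratian a c u g n‖ ≤ M :=
    exists_forall_le_of_le_one_add_mul (add_nonneg (norm_nonneg _) (norm_nonneg _))
      (fun n => mul_nonneg (div_nonneg (norm_nonneg _) (norm_nonneg _)) (hβ (n + 1)))
      (hβ_sum.mul_left (‖z - x‖ / ω)) (norm_casoratian_add_succ_le ha hc hu hf hg hW)
  refine (summable_nat_add_iff 1).1 (.of_nonneg_of_le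
    (fun n => div_nonneg (sq_nonneg _) (hh _).le) (fun n => ?_) (hβ_sum.mul_left ((M / ω) ^ 2)))
  have hhn := hh (n + 1)
  calc ‖u (n + 1)‖ ^ 2 / jacobiWeight a c (n + 1)
      ≤ ((‖f (n + 1)‖ + ‖g (n + 1)‖) * M / ω) ^ 2 / jacobiWeight a c (n + 1) := by
        gcongr
        exact (norm_succ_le_of_casoratian_ne_zero ha hc hf hg hW n).trans (by gcongr; exact hM n)
    _ = (M / ω) ^ 2 * β (n + 1) := by
        simp only [β]
        ring

end Recurrence

section Bessel

variable {𝕜 E ι α : Type*} [RCLike 𝕜] [NormedAddCommGroup E] [InnerProductSpace 𝕜 E]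

lemma summable_norm_inner_sq_div_norm_sq {v : ι → E}
    (hv : Pairwise fun i j => inner 𝕜 (v i) (v j) = 0) (hne : ∀ i, v i ≠ 0) (x : E) :
    Summable fun i => ‖inner 𝕜 (v i) x‖ ^ 2 / ‖v i‖ ^ 2 := by
  have hon : Orthonormal 𝕜 fun i => ((‖v i‖ : 𝕜)⁻¹) • v i := by
    refine ⟨fun i => norm_smul_inv_norm (hne i), fun i j hij => ?_⟩
    simp only [inner_smul_left, inner_smul_right, hv hij, mul_zero, mul_zero]
  refine (hon.inner_products_summable x).congr fun i => ?_
  rw [inner_smul_left, norm_mul, RCLike.norm_conj, norm_inv, RCLike.norm_ofReal, abs_norm, mul_pow,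
    inv_pow, inv_mul_eq_div]

variable [MeasurableSpace α] {μ : Measure α}

lemma inner_toLp_toLp {f g : α → E} (hf : MemLp f 2 μ) (hg : MemLp g 2 μ) :
    inner 𝕜 (hf.toLp f) (hg.toLp g) = ∫ x, inner 𝕜 (f x) (g x) ∂μ := by
  rw [L2.inner_def]
  refine integral_congr_ae ?_
  filter_upwards [hf.coeFn_toLp, hg.coeFn_toLp] with x hfx hgx
  rw [hfx, hgx]

lemma norm_toLp_sq {F : Type*} [NormedAddCommGroup F] {f : α → F} (hf : MemLp f 2 μ) :
    ‖hf.toLp f‖ ^ 2 = ∫ x, ‖f x‖ ^ 2 ∂μ := by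
  have hnonneg : 0 ≤ ∫ x, ‖f x‖ ^ 2 ∂μ := integral_nonneg fun x => sq_nonneg _
  rw [Lp.norm_toLp, hf.eLpNorm_eq_integral_rpow_norm two_ne_zero ENNReal.ofNat_ne_top,
    ENNReal.toReal_ofNat]
  simp only [Real.rpow_two]
  rw [ENNReal.toReal_ofReal (Real.rpow_nonneg hnonneg _), ← Real.rpow_mul_natCast hnonneg,
    Nat.cast_ofNat, inv_mul_cancel₀ two_ne_zero, Real.rpow_one]

lemma summable_norm_integral_inner_sq_div {φ : ι → α → E} (hφ : ∀ i, MemLp (φ i) 2 μ)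
    (horth : Pairwise fun i j => ∫ x, inner 𝕜 (φ i x) (φ j x) ∂μ = 0)
    (hpos : ∀ i, 0 < ∫ x, ‖φ i x‖ ^ 2 ∂μ) {f : α → E} (hf : MemLp f 2 μ) :
    Summable fun i => ‖∫ x, inner 𝕜 (φ i x) (f x) ∂μ‖ ^ 2 / ∫ x, ‖φ i x‖ ^ 2 ∂μ := by
  have hne (i : ι) : (hφ i).toLp (φ i) ≠ 0 := by
    rw [← norm_ne_zero_iff, ← pow_ne_zero_iff two_ne_zero, norm_toLp_sq]
    exact (hpos i).ne'
  have hbessel := summable_norm_inner_sq_div_norm_sq (𝕜 := 𝕜)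
    (fun i j hij => (inner_toLp_toLp (hφ i) (hφ j)).trans (horth hij)) hne (hf.toLp f)
  simpa only [inner_toLp_toLp, norm_toLp_sq] using hbessel

end Bessel

section Orthogonality

/-- The sequence of functions generated by a three-term recurrence from `p_{-1} = 0` and `p_0 = 1`.
Since `n - 1` is truncated, the condition `p_{-1} = 0` is expressed by `c 0 = 0`. -/
structure IsRecurrenceFamily (a b c : ℕ → ℝ) (p : ℕ → ℝ → ℝ) : Prop where
  zero : ∀ y, p 0 y = 1
  c_zero : c 0 = 0
  recurrence : ∀ n y, y * p n y = a n * p (n + 1) y + b n * p n y + c n * p (n - 1) y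

/-- Measures with finite moments of all orders for which the functions `p n` are orthogonal. -/
structure IsOrthogonalityMeasure (p : ℕ → ℝ → ℝ) (μ : Measure ℝ) : Prop where
  integrable_abs_pow : ∀ n : ℕ, Integrable (fun y : ℝ => |y| ^ n) μ
  integral_mul_eq_zero : ∀ m n, m ≠ n → ∫ y, p m y * p n y ∂μ = 0

/-- The functions of the second kind `∫ p n y / (y - z) dμ(y)`, as sequences in `n`. -/
noncomputable def secondKind (p : ℕ → ℝ → ℝ) (μ : Measure ℝ) (z : ℂ) (n : ℕ) : ℂ :=
  ∫ y, p n y • resolvent z y ∂μ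

variable {a b c : ℕ → ℝ} {p : ℕ → ℝ → ℝ} {μ ν : Measure ℝ} {z : ℂ}

lemma integrable_polynomial_eval (hμ : ∀ n : ℕ, Integrable (fun y : ℝ => |y| ^ n) μ)
    (P : Polynomial ℝ) : Integrable (fun y => P.eval y) μ := by
  simp only [Polynomial.eval_eq_sum_range]
  refine integrable_finsetSum _ fun n _ => Integrable.const_mul ?_ _
  exact (hμ n).mono (by fun_prop) (.of_forall fun y => by simp)

lemma memLp_two_polynomial_eval (hμ : ∀ n : ℕ, Integrable (fun y : ℝ => |y| ^ n) μ)
    (P : Polynomial ℝ) : MemLp (fun y => P.eval y) 2 μ := by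
  refine (memLp_two_iff_integrable_sq P.continuous.aestronglyMeasurable).2 ?_
  simpa only [← Polynomial.eval_pow] using integrable_polynomial_eval hμ (P ^ 2)

namespace IsRecurrenceFamily

lemma exists_polynomial_eval_eq (hp : IsRecurrenceFamily a b c p) (ha : ∀ n, a n ≠ 0) (n : ℕ) :
    ∃ P : Polynomial ℝ, ∀ y, p n y = P.eval y := by
  induction n using Nat.strong_induction_on with
  | _ n ih =>
    obtain _ | n := n
    · exact ⟨1, fun y => by rw [hp.zero, Polynomial.eval_one]⟩
    · obtain ⟨P, hP⟩ := ih n n.lt_succ_self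
      obtain ⟨Q, hQ⟩ := ih (n - 1) (by omega)
      refine ⟨.C (a n)⁻¹ * ((.X - .C (b n)) * P - .C (c n) * Q), fun y => ?_⟩
      simp only [Polynomial.eval_mul, Polynomial.eval_sub, Polynomial.eval_C, Polynomial.eval_X,
        ← hP, ← hQ]
      rw [eq_inv_mul_iff_mul_eq₀ (ha n)]
      linear_combination -hp.recurrence n y

lemma memLp_two (hp : IsRecurrenceFamily a b c p) (ha : ∀ n, a n ≠ 0)
    (hμ : ∀ n : ℕ, Integrable (fun y : ℝ => |y| ^ n) μ) (n : ℕ) : MemLp (p n) 2 μ := by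
  obtain ⟨P, hP⟩ := hp.exists_polynomial_eval_eq ha n
  rw [funext hP]
  exact memLp_two_polynomial_eval hμ P

lemma integral_mul_smul {E : Type*} [NormedAddCommGroup E] [NormedSpace ℝ E]
    (hp : IsRecurrenceFamily a b c p) {ψ : ℝ → E}
    (hint : ∀ n, Integrable (fun y => p n y • ψ y) μ) (n : ℕ) :
    ∫ y, (y * p n y) • ψ y ∂μ = a n • ∫ y, p (n + 1) y • ψ y ∂μ + b n • ∫ y, p n y • ψ y ∂μ
      + c n • ∫ y, p (n - 1) y • ψ y ∂μ := by
  simp only [hp.recurrence, add_smul, mul_smul]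
  have hsmul (r : ℝ) (m : ℕ) : Integrable (fun y => r • p m y • ψ y) μ := (hint m).smul r
  rw [integral_add ((hsmul _ _).fun_add (hsmul _ _)) (hsmul _ _),
    integral_add (hsmul _ _) (hsmul _ _), integral_smul, integral_smul, integral_smul]

lemma integral_sq_eq_jacobiWeight [IsProbabilityMeasure μ] (hp : IsRecurrenceFamily a b c p)
    (ha : ∀ n, a n ≠ 0) (hμ : IsOrthogonalityMeasure p μ) (n : ℕ) :
    ∫ y, p n y ^ 2 ∂μ = jacobiWeight a c n := by
  have hint (m k : ℕ) : Integrable (fun y => p k y * p m y) μ :=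
    (hp.memLp_two ha hμ.integrable_abs_pow k).integrable_mul
      (hp.memLp_two ha hμ.integrable_abs_pow m)
  induction n with
  | zero => simp [hp.zero, jacobiWeight_zero]
  | succ n ih =>
    have hn : ∫ y, y * p n y * p (n + 1) y ∂μ = a n * ∫ y, p (n + 1) y ^ 2 ∂μ := by
      have h := hp.integral_mul_smul (hint (n + 1)) n
      simpa [hμ.integral_mul_eq_zero n (n + 1) (by omega),
        hμ.integral_mul_eq_zero (n - 1) (n + 1) (by omega), sq] using h
    have hsucc : ∫ y, y * p n y * p (n + 1) y ∂μ = c (n + 1) * ∫ y, p n y ^ 2 ∂μ := by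
      have h := hp.integral_mul_smul (hint n) (n + 1)
      simpa [hμ.integral_mul_eq_zero (n + 2) n (by omega),
        hμ.integral_mul_eq_zero (n + 1) n (by omega), sq, mul_right_comm] using h
    refine mul_right_cancel₀ (ha n) ?_
    rw [jacobiWeight_succ_mul (ha n), ← ih, mul_comm, ← hn, hsucc, mul_comm]

end IsRecurrenceFamily

lemma integrable_smul_resolvent [IsFiniteMeasure μ] (hz : z.im ≠ 0) {f : ℝ → ℝ}
    (hf : Integrable f μ) : Integrable (fun y => f y • resolvent z y) μ :=
  hf.smul_of_top_left (memLp_resolvent_ofReal μ hz _)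

lemma integral_mul_smul_resolvent [IsFiniteMeasure μ] (hz : z.im ≠ 0) {f : ℝ → ℝ}
    (hf : Integrable f μ) :
    ∫ y, (y * f y) • resolvent z y ∂μ
      = (∫ y, f y ∂μ : ℝ) + z * ∫ y, f y • resolvent z y ∂μ := by
  have hresolvent (y : ℝ) : (y * f y) • resolvent z y = (f y : ℂ) + z * f y • resolvent z y := by
    have hne : (y : ℂ) - z ≠ 0 := fun h => hz (by simpa using congrArg Complex.im h)
    rw [resolvent_ofReal_eq_inv, Complex.real_smul, Complex.real_smul]
    push_cast
    field_simp
    ring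
  have hf_ofReal : Integrable (fun y => (f y : ℂ)) μ := hf.ofReal
  simp only [hresolvent]
  rw [integral_add hf_ofReal ((integrable_smul_resolvent hz hf).const_mul z),
    integral_complex_ofReal, integral_const_mul]

namespace IsRecurrenceFamily

lemma secondKind_zero (hp : IsRecurrenceFamily a b c p) :
    secondKind p μ z 0 = resolventTransform μ z := by
  simp only [secondKind, hp.zero, one_smul, resolventTransform_apply]

lemma integral_succ_eq_zero (hp : IsRecurrenceFamily a b c p) (hμ : IsOrthogonalityMeasure p μ)
    (n : ℕ) : ∫ y, p (n + 1) y ∂μ = 0 := by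
  simpa only [hp.zero, mul_one] using hμ.integral_mul_eq_zero (n + 1) 0 n.succ_ne_zero

variable [IsProbabilityMeasure μ] [IsProbabilityMeasure ν]

lemma integral_add_mul_secondKind (hp : IsRecurrenceFamily a b c p) (ha : ∀ n, a n ≠ 0)
    (hμ : IsOrthogonalityMeasure p μ) (hz : z.im ≠ 0) (n : ℕ) :
    (∫ y, p n y ∂μ : ℝ) + z * secondKind p μ z n = a n * secondKind p μ z (n + 1)
      + b n * secondKind p μ z n + c n * secondKind p μ z (n - 1) := by
  have hint (m : ℕ) : Integrable (p m) μ :=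
    (hp.memLp_two ha hμ.integrable_abs_pow m).integrable one_le_two
  simpa only [Complex.real_smul, secondKind] using
    (integral_mul_smul_resolvent hz (hint n)).symm.trans
      (hp.integral_mul_smul (fun m => integrable_smul_resolvent hz (hint m)) n)

lemma isRecurrenceSolution_secondKind (hp : IsRecurrenceFamily a b c p) (ha : ∀ n, a n ≠ 0)
    (hμ : IsOrthogonalityMeasure p μ) (hz : z.im ≠ 0) :
    IsRecurrenceSolution a b c z (secondKind p μ z) := fun n => by
  simpa [hp.integral_succ_eq_zero hμ] using hp.integral_add_mul_secondKind ha hμ hz (n + 1)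

lemma mul_secondKind_one (hp : IsRecurrenceFamily a b c p) (ha : ∀ n, a n ≠ 0)
    (hμ : IsOrthogonalityMeasure p μ) (hz : z.im ≠ 0) :
    a 0 * secondKind p μ z 1 = 1 + (z - b 0) * secondKind p μ z 0 := by
  have h := hp.integral_add_mul_secondKind ha hμ hz 0
  simp only [hp.zero, hp.c_zero, integral_const, probReal_univ, smul_eq_mul, mul_one,
    Complex.ofReal_one, Complex.ofReal_zero, zero_mul, add_zero, zero_add] at h
  linear_combination -h

lemma summable_norm_secondKind_sq_div (hp : IsRecurrenceFamily a b c p) (ha : ∀ n, 0 < a n)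
    (hc : ∀ n, 0 < c (n + 1)) (hμ : IsOrthogonalityMeasure p μ) (hz : z.im ≠ 0) :
    Summable fun n => ‖secondKind p μ z n‖ ^ 2 / jacobiWeight a c n := by
  have ha_ne (n : ℕ) : a n ≠ 0 := (ha n).ne'
  have hsq (n : ℕ) : ∫ y, ‖(p n y : ℂ)‖ ^ 2 ∂μ = jacobiWeight a c n := by
    simpa using hp.integral_sq_eq_jacobiWeight ha_ne hμ n
  have horth : Pairwise fun m n => ∫ y, inner ℂ (p m y : ℂ) (p n y : ℂ) ∂μ = 0 := by
    intro m n hmn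
    have h := hμ.integral_mul_eq_zero n m hmn.symm
    simp only [RCLike.inner_apply, Complex.conj_ofReal, ← Complex.ofReal_mul]
    rw [integral_complex_ofReal, h, Complex.ofReal_zero]
  have hbessel := summable_norm_integral_inner_sq_div (𝕜 := ℂ)
    (fun n => (hp.memLp_two ha_ne hμ.integrable_abs_pow n).ofReal) horth
    (fun n => (hsq n).symm ▸ jacobiWeight_pos ha hc n) (memLp_resolvent_ofReal μ hz 2)
  simpa only [hsq, RCLike.inner_apply, Complex.conj_ofReal, mul_comm, secondKind, Complex.real_smul]
    using hbessel

theorem orthogonalityMeasure_unique_of_not_summable (hp : IsRecurrenceFamily a b c p)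
    (ha : ∀ n, 0 < a n) (hc : ∀ n, 0 < c (n + 1)) {x : ℂ} {u : ℕ → ℂ}
    (hu : IsRecurrenceSolution a b c x u)
    (hdiv : ¬ Summable fun n => ‖u n‖ ^ 2 / jacobiWeight a c n)
    (hμ : IsOrthogonalityMeasure p μ) (hν : IsOrthogonalityMeasure p ν) : μ = ν := by
  have ha_ne (n : ℕ) : a n ≠ 0 := (ha n).ne'
  refine eq_of_resolventTransform_eq fun z hz => ?_
  by_contra hne
  refine hdiv (hu.summable_norm_sq_div ha hc
    (hp.isRecurrenceSolution_secondKind ha_ne hμ hz.ne')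
    (hp.isRecurrenceSolution_secondKind ha_ne hν hz.ne') (fun hcas => hne ?_)
    (hp.summable_norm_secondKind_sq_div ha hc hμ hz.ne')
    (hp.summable_norm_secondKind_sq_div ha hc hν hz.ne'))
  rw [← hp.secondKind_zero, ← hp.secondKind_zero]
  linear_combination (a 0 : ℂ) * hcas - secondKind p μ z 0 * hp.mul_secondKind_one ha_ne hν hz.ne'
    + secondKind p ν z 0 * hp.mul_secondKind_one ha_ne hμ hz.ne'

end IsRecurrenceFamily

end Orthogonality

section Alternating

/-- The scale function of the birth-death chain with birth rates `a` and death rates `c`, started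
from `1`: multiplied by `(-1) ^ n`, it solves the recurrence at `-d` when `a n - b n + c n = d`. -/
noncomputable def jacobiScale (a c : ℕ → ℝ) (n : ℕ) : ℝ :=
  1 + ∑ k ∈ Finset.range n, jacobiWeight a c k / a k

variable {a b c : ℕ → ℝ} {d K : ℝ}

lemma isRecurrenceSolution_neg_one_pow_mul {v : ℕ → ℂ}
    (hd : ∀ n, a (n + 1) - b (n + 1) + c (n + 1) = d)
    (hv : ∀ n, a (n + 1) * (v (n + 2) - v (n + 1)) = c (n + 1) * (v (n + 1) - v n)) :
    IsRecurrenceSolution a b c (-d) fun n => (-1) ^ n * v n := fun n => by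
  rw [← hd n]
  push_cast
  linear_combination -(-1) ^ n * hv n

lemma jacobiScale_succ (n : ℕ) :
    jacobiScale a c (n + 1) = jacobiScale a c n + jacobiWeight a c n / a n := by
  rw [jacobiScale, jacobiScale, Finset.sum_range_succ, add_assoc]

lemma jacobiScale_pos (ha : ∀ n, 0 < a n) (hc : ∀ n, 0 < c (n + 1)) (n : ℕ) :
    0 < jacobiScale a c n :=
  add_pos_of_pos_of_nonneg one_pos
    (Finset.sum_nonneg fun k _ => (div_pos (jacobiWeight_pos ha hc k) (ha k)).le)

lemma mul_jacobiScale_sub (ha : ∀ n, a n ≠ 0) (n : ℕ) :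
    a (n + 1) * (jacobiScale a c (n + 2) - jacobiScale a c (n + 1))
      = c (n + 1) * (jacobiScale a c (n + 1) - jacobiScale a c n) := by
  rw [jacobiScale_succ (n + 1), jacobiScale_succ n, add_sub_cancel_left, add_sub_cancel_left,
    mul_div_cancel₀ _ (ha _), mul_div_assoc', eq_div_iff (ha n), jacobiWeight_succ_mul (ha n),
    mul_comm]

lemma isRecurrenceSolution_one_add_jacobiScale_mul_I (ha : ∀ n, a n ≠ 0)
    (hd : ∀ n, a (n + 1) - b (n + 1) + c (n + 1) = d) :
    IsRecurrenceSolution a b c (-d) fun n => (-1) ^ n * (1 + jacobiScale a c n * Complex.I) := by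
  refine isRecurrenceSolution_neg_one_pow_mul hd fun n => ?_
  have hscale : (a (n + 1) : ℂ) * (jacobiScale a c (n + 2) - jacobiScale a c (n + 1))
      = c (n + 1) * (jacobiScale a c (n + 1) - jacobiScale a c n) := by
    exact_mod_cast mul_jacobiScale_sub ha n
  linear_combination Complex.I * hscale

lemma jacobiWeight_le_mul_jacobiScale (ha : ∀ n, 0 < a n) (hc : ∀ n, 0 < c (n + 1)) (hK : 0 ≤ K)
    (hca : ∀ n : ℕ, c (n + 1) ≤ a n + K * (n + 1)) (n : ℕ) :
    jacobiWeight a c n ≤ (1 + K * n) * jacobiScale a c n := by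
  induction n with
  | zero => simp [jacobiScale, jacobiWeight_zero]
  | succ n ih =>
    have hs := jacobiScale_pos ha hc n
    have hh := jacobiWeight_pos ha hc n
    have han := ha n
    refine le_of_mul_le_mul_right ?_ han
    calc jacobiWeight a c (n + 1) * a n
        = jacobiWeight a c n * c (n + 1) := jacobiWeight_succ_mul han.ne'
      _ ≤ jacobiWeight a c n * (a n + K * (n + 1)) := by gcongr; exact hca n
      _ = jacobiWeight a c n * a n + K * (n + 1) * jacobiWeight a c n := by ring
      _ ≤ (1 + K * n) * jacobiScale a c n * a n + K * (n + 1) * jacobiWeight a c n := by gcongr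
      _ ≤ (1 + K * (n + 1)) * jacobiScale a c n * a n
            + (1 + K * (n + 1)) * jacobiWeight a c n := by
          gcongr <;> linarith
      _ = (1 + K * (n + 1 : ℕ)) * jacobiScale a c (n + 1) * a n := by
          rw [jacobiScale_succ]
          push_cast
          field_simp

lemma not_summable_one_add_jacobiScale_sq_div (ha : ∀ n, 0 < a n) (hc : ∀ n, 0 < c (n + 1))
    (hK : 0 ≤ K) (hca : ∀ n : ℕ, c (n + 1) ≤ a n + K * (n + 1)) :
    ¬ Summable fun n => (1 + jacobiScale a c n ^ 2) / jacobiWeight a c n := by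
  intro hsum
  have hharmonic : Summable fun n : ℕ => 1 / ((n + 1 : ℕ) : ℝ) := by
    refine .of_nonneg_of_le (fun n => by positivity) (fun n => ?_) (hsum.mul_left (1 + K))
    have hh := jacobiWeight_pos ha hc n
    have hs := jacobiScale_pos ha hc n
    rw [← mul_div_assoc, div_le_div_iff₀ (by positivity) hh, one_mul]
    calc jacobiWeight a c n
        ≤ (1 + K * n) * jacobiScale a c n := jacobiWeight_le_mul_jacobiScale ha hc hK hca n
      _ ≤ ((1 + K) * (n + 1 : ℕ)) * (1 + jacobiScale a c n ^ 2) := by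
          gcongr
          · push_cast
            nlinarith [n.cast_nonneg (α := ℝ)]
          · nlinarith [sq_nonneg (jacobiScale a c n - 1)]
      _ = (1 + K) * (1 + jacobiScale a c n ^ 2) * (n + 1 : ℕ) := by ring
  exact Real.not_summable_one_div_natCast
    ((summable_nat_add_iff (f := fun n : ℕ => 1 / (n : ℝ)) 1).1 hharmonic)

theorem IsRecurrenceFamily.orthogonalityMeasure_unique_of_le {p : ℕ → ℝ → ℝ} {μ ν : Measure ℝ}
    [IsProbabilityMeasure μ] [IsProbabilityMeasure ν] (hp : IsRecurrenceFamily a b c p)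
    (ha : ∀ n, 0 < a n) (hc : ∀ n, 0 < c (n + 1))
    (hd : ∀ n, a (n + 1) - b (n + 1) + c (n + 1) = d) (hK : 0 ≤ K)
    (hca : ∀ n : ℕ, c (n + 1) ≤ a n + K * (n + 1))
    (hμ : IsOrthogonalityMeasure p μ) (hν : IsOrthogonalityMeasure p ν) : μ = ν := by
  have hnorm (n : ℕ) : ‖(-1 : ℂ) ^ n * (1 + jacobiScale a c n * Complex.I)‖ ^ 2
      = 1 + jacobiScale a c n ^ 2 := by
    rw [norm_mul, norm_pow, norm_neg, norm_one, one_pow, one_mul, Complex.sq_norm,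
      ← Complex.ofReal_one, Complex.normSq_add_mul_I, one_pow]
  refine hp.orthogonalityMeasure_unique_of_not_summable ha hc
    (isRecurrenceSolution_one_add_jacobiScale_mul_I (fun n => (ha n).ne') hd) ?_ hμ hν
  simpa only [hnorm] using not_summable_one_add_jacobiScale_sq_div ha hc hK hca

end Alternating

section Coefficients

variable {η θ τ q t : ℝ}

lemma qnum_nonneg (hq0 : 0 ≤ q) (n : ℕ) : 0 ≤ qnum q n :=
  Finset.sum_nonneg fun i _ => pow_nonneg hq0 i

lemma qnum_succ (q : ℝ) (n : ℕ) : qnum q (n + 1) = q * qnum q n + 1 := by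
  rw [qnum, qnum, geom_sum_succ]

lemma qnum_succ_pos (hq0 : 0 ≤ q) (n : ℕ) : 0 < qnum q (n + 1) :=
  qnum_succ q n ▸ add_pos_of_nonneg_of_pos (mul_nonneg hq0 (qnum_nonneg hq0 n)) one_pos

lemma qnum_le_natCast (hq0 : 0 ≤ q) (hq1 : q ≤ 1) (n : ℕ) : qnum q n ≤ n := by
  simpa [qnum] using Finset.sum_le_card_nsmul (Finset.range n) (q ^ ·) 1
    fun i _ => pow_le_one₀ hq0 hq1

lemma aCoef_pos (hq0 : 0 ≤ q) (hη : 0 < η) (hθ : 0 ≤ θ) (hτ : 0 ≤ τ) (n : ℕ) :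
    0 < aCoef η θ τ q n := by
  have := qnum_nonneg hq0 n
  unfold aCoef
  positivity

lemma cCoef_zero : cCoef η τ q t 0 = 0 := by
  simp [cCoef, qnum]

lemma cCoef_succ_pos (hq0 : 0 ≤ q) (hη : 0 < η) (hτ : 0 ≤ τ) (ht : 0 < t) (n : ℕ) :
    0 < cCoef η τ q t (n + 1) := by
  have := qnum_nonneg hq0 n
  have := qnum_succ_pos hq0 n
  rw [cCoef, Nat.add_sub_cancel]
  positivity

lemma aCoef_sub_bCoef_add_cCoef (n : ℕ) :
    aCoef η θ τ q n - bCoef η θ τ q t n + cCoef η τ q t n = η⁻¹ := by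
  unfold aCoef bCoef cCoef
  ring

lemma cCoef_succ_le (hq0 : 0 ≤ q) (hq1 : q ≤ 1) (hη : 0 < η) (hθ : 0 ≤ θ) (hτ : 0 ≤ τ) (ht : 0 < t)
    (n : ℕ) : cCoef η τ q t (n + 1) ≤ aCoef η θ τ q n + η * (t + τ) * (n + 1) := by
  have hn := qnum_nonneg hq0 n
  have hn_le := qnum_le_natCast hq0 hq1 n
  have hsucc : qnum q (n + 1) ≤ qnum q n + 1 := by
    rw [qnum_succ]
    exact add_le_add_left (mul_le_of_le_one_left hn hq1) 1
  calc cCoef η τ q t (n + 1)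
      ≤ η * (t + τ * qnum q n) * (qnum q n + 1) := by
        rw [cCoef, Nat.add_sub_cancel]
        gcongr
    _ = η * τ * qnum q n ^ 2 + (η * t * (qnum q n + 1) + η * τ * qnum q n) := by ring
    _ ≤ aCoef η θ τ q n + (η * t * (n + 1) + η * τ * (n + 1)) := by
        have hθn : 0 ≤ η⁻¹ + θ * qnum q n := by positivity
        gcongr
        · rw [aCoef]
          linarith
        · linarith
    _ = aCoef η θ τ q n + η * (t + τ) * (n + 1) := by ring

end Coefficients

/-- for `0 ≤ q ≤ 1`, `η > 0`, `θ ≥ 0`, `τ ≥ 0`, `t > 0`, any two probability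
measures on `ℝ` with finite moments of all orders that are orthogonality measures of the
polynomials `{p_n(·;t)}` coincide: the orthogonality measure is determined by moments. -/
theorem stmt11 (η θ τ q t : ℝ)
    (hq0 : 0 ≤ q) (hq1 : q ≤ 1) (hη : 0 < η) (hθ : 0 ≤ θ) (hτ : 0 ≤ τ) (ht : 0 < t)
    (p : ℕ → ℝ → ℝ)
    (hp0 : ∀ y : ℝ, p 0 y = 1)
    (hprec : ∀ (n : ℕ) (y : ℝ), y * p n y =
      aCoef η θ τ q n * p (n + 1) y + bCoef η θ τ q t n * p n y
        + cCoef η τ q t n * p (n - 1) y)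
    (μ₁ μ₂ : Measure ℝ)
    (hprob₁ : IsProbabilityMeasure μ₁) (hprob₂ : IsProbabilityMeasure μ₂)
    (hmom₁ : ∀ n : ℕ, Integrable (fun y : ℝ => |y| ^ n) μ₁)
    (hmom₂ : ∀ n : ℕ, Integrable (fun y : ℝ => |y| ^ n) μ₂)
    (horth₁ : ∀ m n : ℕ, m ≠ n → ∫ y, p m y * p n y ∂μ₁ = 0)
    (horth₂ : ∀ m n : ℕ, m ≠ n → ∫ y, p m y * p n y ∂μ₂ = 0) :
    μ₁ = μ₂ := by
  have hp : IsRecurrenceFamily (aCoef η θ τ q) (bCoef η θ τ q t) (cCoef η τ q t) p :=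
    ⟨hp0, cCoef_zero, hprec⟩
  exact hp.orthogonalityMeasure_unique_of_le (aCoef_pos hq0 hη hθ hτ) (cCoef_succ_pos hq0 hη hτ ht)
    (fun n => aCoef_sub_bCoef_add_cCoef (n + 1)) (by positivity)
    (cCoef_succ_le hq0 hq1 hη hθ hτ ht) ⟨hmom₁, horth₁⟩ ⟨hmom₂, horth₂⟩
end
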